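/- arXiv:1608.02406 — 4 statements merged into one kernel-verified Lean document; each statement's English description precedes it below -/
import Mathlib

section
/- In the bribery construction, for every rational ballot r and every rational ballot E such that E sets all issues u_{i,ℓ} (ℓ ∈ [u]) to true for some i ∈ [3] and E sets at least one issue b_j to true, E is not a Kemeny outcome of the profile (r, J₂, J₃): the ballot E' obtained from E by setting every b_j to false is rational and satisfies Dist(E', (r, J₂, J₃)) < Dist(E, (r, J₂, J₃)). -/
/-!
Clearing the b-issues leaves every u-issue alone, so the complete u-row of `E` survives and `clearB E`
is rational. The cumulative distance is a sum of issue-wise disagreement counts (`dist3_eq_sum`).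
On a b-issue that `E` accepts, both J₂ and J₃ reject, so clearing it removes two disagreements and
adds at most one (with `r`, whatever `r` is); all other issues are unchanged. Hence the sum
drops strictly, and `E` is not a minimizer.
-/

/-!
Constraint-based judgment aggregation: the bribery construction.
Issues are modelled as an inductive type, ballots as functions `Issue n m → Bool`,
the integrity constraint as a predicate on ballots, and the formula ψ as a Boolean
function of the assignments to X and Y.
-/

namespace Brib

/-- The issues of the bribery construction. -/
inductive Issue (n m : ℕ) : Type
  | x : Fin n → Issue n m
  | x' : Fin n → Issue n m
  | z : Fin n → Issue n m
  | y : Fin m → Issue n m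
  | y' : Fin m → Issue n m
  | t : Fin m → Issue n m
  | u : Fin 3 → Fin (10 * n + 10 * m + 10) → Issue n m
  | a : Issue n m
  | b : Fin (2 * m + 4) → Issue n m
  deriving DecidableEq, Fintype

variable {n m : ℕ}

/-- Hamming distance between two ballots: the number of issues on which they differ. -/
def hamming {I : Type*} [Fintype I] (r r' : I → Bool) : ℕ :=
  (Finset.univ.filter (fun i => r i ≠ r' i)).card

/-- Weighted Hamming distance: the sum of the weights of the issues on which the
two ballots differ. -/
def whamming {I : Type*} [Fintype I] (w : I → ℕ) (r r' : I → Bool) : ℕ :=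
  ∑ i ∈ Finset.univ.filter (fun i => r i ≠ r' i), w i

def bigA (r : Issue n m → Bool) : Prop := ∀ i, r (.x i) ≠ r (.x' i)
def bigZ (r : Issue n m → Bool) : Prop := ∀ i, r (.z i) = true
def bigB (r : Issue n m → Bool) : Prop := ∀ j, r (.y j) ≠ r (.y' j)
def bigT (r : Issue n m → Bool) : Prop := ∀ j, r (.t j) = true
def bigC (r : Issue n m → Bool) : Prop := ∀ j, r (.b j) = true

/-- The part Γ₀ of the integrity constraint. -/
def gamma0 (psi : (Fin n → Bool) → (Fin m → Bool) → Bool) (r : Issue n m → Bool) : Prop :=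
  (r .a = true ∨ bigC r) ∧ (r .a = true → ∀ j, r (.b j) = false) ∧
  (bigC r → r .a = false) ∧
  (bigA r ∨ bigZ r) ∧ (bigA r → ∀ i, r (.z i) = false) ∧
  Xor' (bigB r) (bigT r) ∧ (bigB r → ∀ j, r (.t j) = false) ∧
  (bigZ r → ∀ i, r (.x i) = false ∧ r (.x' i) = false) ∧
  (bigT r → ∀ j, r (.y j) = false ∧ r (.y' j) = false) ∧
  (bigZ r → (r .a = true ∧ bigT r)) ∧
  ((bigA r ∧ bigB r) →
    (psi (fun i => r (.x i)) (fun j => r (.y j)) = false ∧ r .a = true)) ∧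
  ((bigA r ∧ bigT r) → bigC r)

/-- A ballot is rational if it satisfies the integrity constraint
`Γ = Γ₀ ∨ ⋁_{i∈[3]} ⋀_{ℓ∈[u]} u_{i,ℓ}`. -/
def rational (psi : (Fin n → Bool) → (Fin m → Bool) → Bool) (r : Issue n m → Bool) : Prop :=
  gamma0 psi r ∨ ∃ i : Fin 3, ∀ ℓ, r (.u i ℓ) = true

/-- The profile J⃗ = (J₁, J₂, J₃): the ballot J_{k+1} sets exactly the issues
u_{k+1,ℓ} to true. -/
def Jp (k : Fin 3) : Issue n m → Bool := fun i => match i with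
  | .u k' _ => k' == k
  | _ => false

/-- The briber's desired ballot J₀: true exactly on the b- and u₁-issues. -/
def Jzero : Issue n m → Bool := fun i => match i with
  | .b _ => true
  | .u k _ => k == 0
  | _ => false

/-- The briber's weight function: weight 1 on each b-issue, weight 0 elsewhere. -/
def wt : Issue n m → ℕ := fun i => match i with
  | .b _ => 1
  | _ => 0

/-- Cumulative Hamming distance of a ballot to a profile of three ballots. -/
def dist3 (r p1 p2 p3 : Issue n m → Bool) : ℕ :=
  hamming r p1 + hamming r p2 + hamming r p3

/-- Membership in the set of Kemeny outcomes of the profile (p1, p2, p3):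
a rational ballot minimizing the cumulative Hamming distance among rational ballots. -/
def kemenyMem (psi : (Fin n → Bool) → (Fin m → Bool) → Bool)
    (p1 p2 p3 r : Issue n m → Bool) : Prop :=
  rational psi r ∧ ∀ r', rational psi r' → dist3 r p1 p2 p3 ≤ dist3 r' p1 p2 p3

/-- The ballot obtained from `E` by setting every b-issue to false. -/
def clearB (E : Issue n m → Bool) : Issue n m → Bool := fun i => match i with
  | .b _ => false
  | i => E i

end Brib

namespace Brib

/-- The number of ballots among `p1, p2, p3` that disagree with `r` on the issue `i`. -/
def disagree {n m : ℕ} (r p1 p2 p3 : Issue n m → Bool) (i : Issue n m) : ℕ :=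
  (if r i ≠ p1 i then 1 else 0) + (if r i ≠ p2 i then 1 else 0) + (if r i ≠ p3 i then 1 else 0)

theorem dist3_eq_sum {n m : ℕ} (r p1 p2 p3 : Issue n m → Bool) :
    dist3 r p1 p2 p3 = ∑ i, disagree r p1 p2 p3 i := by
  simp only [dist3, hamming, disagree, Finset.sum_add_distrib, Finset.card_filter]

/-- On an accepted b-issue the disagreements with J₂ and J₃ outweigh the possible one with `r`. -/
theorem disagree_clearB_lt {n m : ℕ} (r E : Issue n m → Bool) (j : Fin (2 * m + 4))
    (hj : E (.b j) = true) :
    disagree (clearB E) r (Jp 1) (Jp 2) (.b j) < disagree E r (Jp 1) (Jp 2) (.b j) := by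
  cases h : r (.b j) <;> simp [disagree, clearB, Jp, hj, h]

theorem disagree_clearB_le {n m : ℕ} (r E : Issue n m → Bool) (i : Issue n m) :
    disagree (clearB E) r (Jp 1) (Jp 2) i ≤ disagree E r (Jp 1) (Jp 2) i := by
  cases i with
  | b j =>
    cases hj : E (.b j) with
    | true => exact (disagree_clearB_lt r E j hj).le
    | false => simp [disagree, clearB, hj]
  | _ => exact le_rfl

end Brib

open Brib in
/-- for every rational ballot r and every rational ballot E that sets
some complete u-row to true and at least one b-issue to true, E is not a Kemeny
outcome of (r, J₂, J₃): the ballot E' obtained from E by setting every b-issue to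
false is rational and strictly closer (cumulatively) to the profile. -/
theorem brib_clearB_improves (n m : ℕ) (hn : 0 < n) (hm : 0 < m)
    (psi : (Fin n → Bool) → (Fin m → Bool) → Bool)
    (r : Issue n m → Bool) (hr : rational psi r)
    (E : Issue n m → Bool) (hE : rational psi E)
    (hu : ∃ i : Fin 3, ∀ ℓ, E (.u i ℓ) = true)
    (hb : ∃ j, E (.b j) = true) :
    rational psi (clearB E) ∧
    dist3 (clearB E) r (Jp 1) (Jp 2) < dist3 E r (Jp 1) (Jp 2) ∧
    ¬ kemenyMem psi r (Jp 1) (Jp 2) E := by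
  have hrat : rational psi (clearB E) := Or.inr hu
  have hlt : dist3 (clearB E) r (Jp 1) (Jp 2) < dist3 E r (Jp 1) (Jp 2) := by
    obtain ⟨j, hj⟩ := hb
    rw [dist3_eq_sum, dist3_eq_sum]
    exact Finset.sum_lt_sum (fun i _ => disagree_clearB_le r E i)
      ⟨.b j, Finset.mem_univ _, disagree_clearB_lt r E j hj⟩
  exact ⟨hrat, hlt, fun hK => (hK.2 _ hrat).not_gt hlt⟩
end

section
/- In the control construction, the Kemeny outcomes of the restricted profile on the initial subagenda Φ' are exactly Kemeny(J⃗|_{Φ'}) = {J*_{old,0}} ∪ {J*_{old,β} : β : Y → Bool}, each of these ballots has cumulative Hamming distance 3m + 2 + 3u to J⃗|_{Φ'}, and every Kemeny outcome of J⃗|_{Φ'} sets the issue b to false. -/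
/-!
Only the issues of `Φ'` count, and the cumulative distance splits issue by issue: an issue
`y_j`, `y'_j`, `t_j` or `b` costs 3 if it is accepted and 0 otherwise (all three judges reject it),
while `a` and each `u_{k,ℓ}`, accepted by exactly one judge, cost 2 if accepted and 1 otherwise
(`dist_restrict`). Since `n > 0`, setting all `x_i` and `x'_i` to true falsifies the premise
`⋀ (x_i ⊕ x'_i)`, so `Γ₀` imposes on `Φ'` only that exactly one of `a`, `b` holds and that
`⋀ (y_j ⊕ y'_j)` or `⋀ t_j` holds; in particular the named ballots are rational.

For the lower bound (`dist_lower`), a ballot accepting a whole block `u_{k,·}` costs at least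
`1 + 4u > 3m + 2 + 3u`. Under `Γ₀`, for each `j` at least one of `y_j, y'_j, t_j` is accepted, which
costs at least `3m` in total, and the pair `a, b` costs at least 2. Equality forces all `u_{k,ℓ}` and
`b` to be rejected, `a` to be accepted, and exactly one of `y_j, y'_j, t_j` to be accepted for each
`j`; together with `⋀ (y_j ⊕ y'_j) ∨ ⋀ t_j` these are exactly the named ballots.
-/

/-!
Extended constraint-based judgment aggregation: the control construction.
The full set Φ of issues is an inductive type; subagendas are `Finset`s of issues;
a ballot on a subagenda Ψ is a function `↥Ψ → Bool`, and it is rational if it extends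
to a ballot on all of Φ satisfying the integrity constraint Γ.
-/

namespace Ctrl

/-- The full set Φ of issues of the control construction. -/
inductive Issue (n m : ℕ) : Type
  | x : Fin n → Issue n m
  | x' : Fin n → Issue n m
  | y : Fin m → Issue n m
  | y' : Fin m → Issue n m
  | t : Fin m → Issue n m
  | a : Issue n m
  | b : Issue n m
  | u : Fin 3 → Fin (10 * n + 10 * m + 10) → Issue n m
  deriving DecidableEq, Fintype

variable {n m : ℕ}

/-- Hamming distance between two ballots on a (sub)agenda. -/
def hamming {I : Type*} [Fintype I] (r r' : I → Bool) : ℕ :=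
  (Finset.univ.filter (fun i => r i ≠ r' i)).card

def bigA (r : Issue n m → Bool) : Prop := ∀ i, r (.x i) ≠ r (.x' i)
def bigB (r : Issue n m → Bool) : Prop := ∀ j, r (.y j) ≠ r (.y' j)
def bigT (r : Issue n m → Bool) : Prop := ∀ j, r (.t j) = true

/-- The part Γ₀ of the integrity constraint. -/
def gamma0 (psi : (Fin n → Bool) → (Fin m → Bool) → Bool) (r : Issue n m → Bool) : Prop :=
  (r .a = true ∨ r .b = true) ∧ (r .a = false ∨ r .b = false) ∧
  (bigB r ∨ bigT r) ∧
  (bigA r →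
    ((bigB r ∧ r .a = true ∧ psi (fun i => r (.x i)) (fun j => r (.y j)) = false) ∨
     (r .b = true ∧ ∀ j, r (.t j) = true ∧ r (.y j) = false ∧ r (.y' j) = false)))

/-- The integrity constraint `Γ = Γ₀ ∨ ⋁_{i∈[3]} ⋀_{ℓ∈[u]} u_{i,ℓ}` on full ballots. -/
def Gamma (psi : (Fin n → Bool) → (Fin m → Bool) → Bool) (r : Issue n m → Bool) : Prop :=
  gamma0 psi r ∨ ∃ i : Fin 3, ∀ ℓ, r (.u i ℓ) = true

/-- A ballot on a subagenda Ψ is rational if it extends to a truth assignment of all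
of Φ that satisfies Γ. -/
def rationalOn (psi : (Fin n → Bool) → (Fin m → Bool) → Bool)
    (Ψ : Finset (Issue n m)) (r : ↥Ψ → Bool) : Prop :=
  ∃ r' : Issue n m → Bool, (∀ i : ↥Ψ, r' i.1 = r i) ∧ Gamma psi r'

/-- The restriction of a full ballot to a subagenda Ψ. -/
def restrict (Ψ : Finset (Issue n m)) (J : Issue n m → Bool) : ↥Ψ → Bool :=
  fun i => J i.1

/-- The profile J⃗ = (J₁, J₂, J₃): the ballot J_{k+1} sets all x- and x'-issues and
the issues u_{k+1,ℓ} to true, J₃ additionally sets a to true, and all other issues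
are set to false. -/
def Jp (k : Fin 3) : Issue n m → Bool := fun i => match i with
  | .x _ => true
  | .x' _ => true
  | .u k' _ => k' == k
  | .a => k == 2
  | _ => false

/-- Cumulative Hamming distance of a ballot on a subagenda Ψ to the restricted
profile J⃗|_Ψ. -/
def DistOn (Ψ : Finset (Issue n m)) (r : ↥Ψ → Bool) : ℕ :=
  hamming r (restrict Ψ (Jp 0)) + hamming r (restrict Ψ (Jp 1)) +
    hamming r (restrict Ψ (Jp 2))

/-- Membership in the set of Kemeny outcomes of the restricted profile J⃗|_Ψ:
a rational ballot on Ψ minimizing the cumulative Hamming distance to J⃗|_Ψ among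
all rational ballots on Ψ. -/
def kemenyOn (psi : (Fin n → Bool) → (Fin m → Bool) → Bool)
    (Ψ : Finset (Issue n m)) (r : ↥Ψ → Bool) : Prop :=
  rationalOn psi Ψ r ∧ ∀ r' : ↥Ψ → Bool, rationalOn psi Ψ r' → DistOn Ψ r ≤ DistOn Ψ r'

/-- Indicator of membership in the initial subagenda Φ': all issues except the
x- and x'-issues. -/
def inPhi' : Issue n m → Bool := fun i => match i with
  | .x _ => false
  | .x' _ => false
  | _ => true

/-- The initial subagenda Φ'. -/
def Phi' (n m : ℕ) : Finset (Issue n m) :=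
  Finset.univ.filter (fun i => inPhi' i = true)

theorem b_mem_Phi' : (Issue.b : Issue n m) ∈ Phi' n m :=
  Finset.mem_filter.mpr ⟨Finset.mem_univ _, rfl⟩

/-- The ballot J*_{old,0} on Φ': true exactly on the t-issues and a. -/
def JoldZero : ↥(Phi' n m) → Bool := fun i => match i.1 with
  | .t _ => true
  | .a => true
  | _ => false

/-- The ballot J*_{old,β} on Φ': y_j ↦ β(y_j), y'_j ↦ ¬β(y_j), a true,
every other issue of Φ' false. -/
def JoldBeta (β : Fin m → Bool) : ↥(Phi' n m) → Bool := fun i => match i.1 with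
  | .y j => β j
  | .y' j => !(β j)
  | .a => true
  | _ => false

end Ctrl

namespace Ctrl

/-- The issues of `Φ'`, listed by kind: `y`, `y'`, `t`, `a`, `b`, `u`. -/
def phiEquiv (n m : ℕ) :
    (Fin m ⊕ Fin m ⊕ Fin m) ⊕ (Unit ⊕ Unit) ⊕ (Fin 3 × Fin (10 * n + 10 * m + 10)) ≃
      ↥(Phi' n m) where
  toFun
    | .inl (.inl j) => ⟨.y j, Finset.mem_filter.mpr ⟨Finset.mem_univ _, rfl⟩⟩
    | .inl (.inr (.inl j)) => ⟨.y' j, Finset.mem_filter.mpr ⟨Finset.mem_univ _, rfl⟩⟩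
    | .inl (.inr (.inr j)) => ⟨.t j, Finset.mem_filter.mpr ⟨Finset.mem_univ _, rfl⟩⟩
    | .inr (.inl (.inl _)) => ⟨.a, Finset.mem_filter.mpr ⟨Finset.mem_univ _, rfl⟩⟩
    | .inr (.inl (.inr _)) => ⟨.b, Finset.mem_filter.mpr ⟨Finset.mem_univ _, rfl⟩⟩
    | .inr (.inr (k, l)) => ⟨.u k l, Finset.mem_filter.mpr ⟨Finset.mem_univ _, rfl⟩⟩
  invFun
    | ⟨.y j, _⟩ => .inl (.inl j)
    | ⟨.y' j, _⟩ => .inl (.inr (.inl j))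
    | ⟨.t j, _⟩ => .inl (.inr (.inr j))
    | ⟨.a, _⟩ => .inr (.inl (.inl ()))
    | ⟨.b, _⟩ => .inr (.inl (.inr ()))
    | ⟨.u k l, _⟩ => .inr (.inr (k, l))
    | ⟨.x i, h⟩ => absurd (Finset.mem_filter.mp h).2 (by simp [inPhi'])
    | ⟨.x' i, h⟩ => absurd (Finset.mem_filter.mp h).2 (by simp [inPhi'])
  left_inv := by
    rintro ((j | j | j) | (⟨⟩ | ⟨⟩) | ⟨k, l⟩) <;> rfl
  right_inv := by
    rintro ⟨i, h⟩
    cases i <;> first | rfl | exact absurd (Finset.mem_filter.mp h).2 (by simp [inPhi'])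

theorem mem_Phi' {i : Issue n m} : i ∈ Phi' n m ↔ inPhi' i = true := by
  simp [Phi']

/-- The extension of a ballot on `Φ'` to `Φ` that accepts all `x_i` and `x'_i`. For `n > 0` it
falsifies the premise `bigA` of the last conjunct of `gamma0`. -/
def extendTrue (r : ↥(Phi' n m) → Bool) : Issue n m → Bool :=
  fun i => if h : i ∈ Phi' n m then r ⟨i, h⟩ else true

theorem restrict_extendTrue (r : ↥(Phi' n m) → Bool) :
    restrict (Phi' n m) (extendTrue r) = r := by
  funext i
  simp [restrict, extendTrue]

theorem not_bigA_extendTrue (hn : 0 < n) (r : ↥(Phi' n m) → Bool) : ¬ bigA (extendTrue r) := by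
  intro h
  exact h ⟨0, hn⟩ (by simp [extendTrue, mem_Phi', inPhi'])

/-- The number of judges that the judgment `c` on issue `i` disagrees with. -/
def cost (i : Issue n m) (c : Bool) : ℕ :=
  (if c ≠ Jp 0 i then 1 else 0) + (if c ≠ Jp 1 i then 1 else 0) + (if c ≠ Jp 2 i then 1 else 0)

theorem cost_y (j : Fin m) (c : Bool) : cost (.y j : Issue n m) c = 3 * c.toNat := by
  cases c <;> rfl

theorem cost_y' (j : Fin m) (c : Bool) : cost (.y' j : Issue n m) c = 3 * c.toNat := by
  cases c <;> rfl

theorem cost_t (j : Fin m) (c : Bool) : cost (.t j : Issue n m) c = 3 * c.toNat := by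
  cases c <;> rfl

theorem cost_a (c : Bool) : cost (.a : Issue n m) c = 1 + c.toNat := by
  cases c <;> rfl

theorem cost_b (c : Bool) : cost (.b : Issue n m) c = 3 * c.toNat := by
  cases c <;> rfl

theorem cost_u (k : Fin 3) (l : Fin (10 * n + 10 * m + 10)) (c : Bool) :
    cost (.u k l : Issue n m) c = 1 + c.toNat := by
  fin_cases k <;> cases c <;> rfl

theorem dist_eq_sum_cost (R : Issue n m → Bool) :
    DistOn (Phi' n m) (restrict (Phi' n m) R) = ∑ i : ↥(Phi' n m), cost i.1 (R i.1) := by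
  simp only [DistOn, hamming, Finset.card_filter, ← Finset.sum_add_distrib]
  rfl

/-- The cumulative distance, as a function of the accepted issues of `Φ'`. -/
theorem dist_restrict (R : Issue n m → Bool) :
    DistOn (Phi' n m) (restrict (Phi' n m) R) =
      3 * ∑ j, ((R (.y j)).toNat + (R (.y' j)).toNat + (R (.t j)).toNat)
        + (1 + (R .a).toNat) + 3 * (R .b).toNat
        + (3 * (10 * n + 10 * m + 10) + ∑ k, ∑ l, (R (.u k l)).toNat) := by
  rw [dist_eq_sum_cost, ← (phiEquiv n m).sum_comp]
  simp only [Fintype.sum_sum_type, Fintype.sum_prod_type, phiEquiv, Equiv.coe_fn_mk,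
    cost_y, cost_y', cost_t, cost_a, cost_b, cost_u, Finset.sum_add_distrib, ← Finset.mul_sum,
    Finset.sum_const, Finset.card_univ, Fintype.card_prod, Fintype.card_fin, Fintype.card_unit,
    smul_eq_mul]
  ring

/-- Every ballot satisfying `Γ` has distance at least `3m + 2 + 3u`, with equality only for the
ballots whose restriction to `Φ'` is one of the named ones. -/
theorem dist_lower (psi : (Fin n → Bool) → (Fin m → Bool) → Bool) (R : Issue n m → Bool)
    (hR : Gamma psi R) :
    3 * m + 2 + 3 * (10 * n + 10 * m + 10) ≤ DistOn (Phi' n m) (restrict (Phi' n m) R) ∧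
    (DistOn (Phi' n m) (restrict (Phi' n m) R) ≤ 3 * m + 2 + 3 * (10 * n + 10 * m + 10) →
      restrict (Phi' n m) R = JoldZero ∨ ∃ β, restrict (Phi' n m) R = JoldBeta β) := by
  rw [dist_restrict]
  rcases hR with ⟨hab, hab', hBT, -⟩ | ⟨k, hk⟩
  · have hone : ∀ j, 1 ≤ (R (.y j)).toNat + (R (.y' j)).toNat + (R (.t j)).toNat := by
      intro j
      rcases hBT with h | h
      · have := h j
        cases h1 : R (.y j) <;> cases h2 : R (.y' j) <;> simp_all
      · simp [h j]
    have hsum : m ≤ ∑ j, ((R (.y j)).toNat + (R (.y' j)).toNat + (R (.t j)).toNat) := by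
      simpa using Finset.sum_le_sum (fun j (_ : j ∈ Finset.univ) => hone j)
    have hcost : 2 ≤ (1 + (R .a).toNat) + 3 * (R .b).toNat ∧
        ((1 + (R .a).toNat) + 3 * (R .b).toNat ≤ 2 → R .a = true ∧ R .b = false) := by
      cases h1 : R .a <;> cases h2 : R .b <;> simp_all
    refine ⟨by omega, fun hle => ?_⟩
    obtain ⟨ha, hb⟩ := hcost.2 (by omega)
    have hu : ∀ k l, R (.u k l) = false := by
      have h0 : ∑ k, ∑ l, (R (.u k l)).toNat = 0 := by omega
      simpa [Finset.sum_eq_zero_iff] using h0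
    -- The sum attains its termwise lower bound, so each term does.
    have heq : ∀ j, (R (.y j)).toNat + (R (.y' j)).toNat + (R (.t j)).toNat = 1 := by
      have h1 : ∑ j : Fin m, 1 =
          ∑ j, ((R (.y j)).toNat + (R (.y' j)).toNat + (R (.t j)).toNat) := by
        simp only [Finset.sum_const, Finset.card_univ, Fintype.card_fin, smul_eq_mul, mul_one]
        omega
      intro j
      exact ((Finset.sum_eq_sum_iff_of_le (fun j _ => hone j)).mp h1 j (Finset.mem_univ j)).symm
    rcases hBT with h | h
    · refine .inr ⟨fun j => R (.y j), ?_⟩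
      have hy : ∀ j, R (.y' j) = !R (.y j) ∧ R (.t j) = false := by
        intro j
        have h1 := h j
        have h2 := heq j
        cases h3 : R (.y j) <;> cases h4 : R (.y' j) <;> simp_all
      funext ⟨i, hi⟩
      have hi' := mem_Phi'.mp hi
      cases i <;> simp_all [restrict, JoldBeta, inPhi']
    · refine .inl ?_
      have hy : ∀ j, R (.y j) = false ∧ R (.y' j) = false := by
        intro j
        have h1 := h j
        have h2 := heq j
        cases h3 : R (.y j) <;> cases h4 : R (.y' j) <;> simp_all
      have ht : ∀ j, R (.t j) = true := h
      funext ⟨i, hi⟩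
      have hi' := mem_Phi'.mp hi
      cases i <;> simp_all [restrict, JoldZero, inPhi']
  · have hblock : 10 * n + 10 * m + 10 ≤ ∑ k, ∑ l, (R (.u k l)).toNat := by
      calc 10 * n + 10 * m + 10 = ∑ l, (R (.u k l)).toNat := by simp [hk]
        _ ≤ _ := Finset.single_le_sum (f := fun k => ∑ l, (R (.u k l)).toNat)
          (fun _ _ => Nat.zero_le _) (Finset.mem_univ k)
    exact ⟨by omega, fun hle => absurd hle (by omega)⟩

theorem dist_JoldZero : DistOn (Phi' n m) (JoldZero : ↥(Phi' n m) → Bool)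
    = 3 * m + 2 + 3 * (10 * n + 10 * m + 10) := by
  rw [← restrict_extendTrue JoldZero, dist_restrict]
  simp [extendTrue, mem_Phi', inPhi', JoldZero]

theorem dist_JoldBeta (β : Fin m → Bool) : DistOn (Phi' n m) (JoldBeta β : ↥(Phi' n m) → Bool)
    = 3 * m + 2 + 3 * (10 * n + 10 * m + 10) := by
  rw [← restrict_extendTrue (JoldBeta β), dist_restrict]
  have h : ∀ c : Bool, c.toNat + (!c).toNat = 1 := by decide
  simp [extendTrue, mem_Phi', inPhi', JoldBeta, h]

theorem rational_JoldZero (hn : 0 < n) (psi : (Fin n → Bool) → (Fin m → Bool) → Bool) :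
    rationalOn psi (Phi' n m) JoldZero :=
  ⟨extendTrue JoldZero, fun i => congrFun (restrict_extendTrue _) i,
    .inl ⟨.inl (by simp [extendTrue, mem_Phi', inPhi', JoldZero]),
      .inr (by simp [extendTrue, mem_Phi', inPhi', JoldZero]),
      .inr (fun j => by simp [extendTrue, mem_Phi', inPhi', JoldZero]),
      fun h => absurd h (not_bigA_extendTrue hn _)⟩⟩

theorem rational_JoldBeta (hn : 0 < n) (psi : (Fin n → Bool) → (Fin m → Bool) → Bool)
    (β : Fin m → Bool) : rationalOn psi (Phi' n m) (JoldBeta β) :=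
  ⟨extendTrue (JoldBeta β), fun i => congrFun (restrict_extendTrue _) i,
    .inl ⟨.inl (by simp [extendTrue, mem_Phi', inPhi', JoldBeta]),
      .inr (by simp [extendTrue, mem_Phi', inPhi', JoldBeta]),
      .inl (fun j => by simp [extendTrue, mem_Phi', inPhi', JoldBeta]),
      fun h => absurd h (not_bigA_extendTrue hn _)⟩⟩

theorem kemeny_iff (hn : 0 < n) (psi : (Fin n → Bool) → (Fin m → Bool) → Bool)
    (r : ↥(Phi' n m) → Bool) :
    kemenyOn psi (Phi' n m) r ↔ (r = JoldZero ∨ ∃ β : Fin m → Bool, r = JoldBeta β) := by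
  have lower : ∀ s : ↥(Phi' n m) → Bool, rationalOn psi (Phi' n m) s →
      3 * m + 2 + 3 * (10 * n + 10 * m + 10) ≤ DistOn (Phi' n m) s := by
    rintro s ⟨R, hRs, hR⟩
    obtain rfl : restrict (Phi' n m) R = s := funext hRs
    exact (dist_lower psi R hR).1
  constructor
  · rintro ⟨⟨R, hRr, hR⟩, hmin⟩
    obtain rfl : restrict (Phi' n m) R = r := funext hRr
    exact (dist_lower psi R hR).2 (dist_JoldZero ▸ hmin _ (rational_JoldZero hn psi))
  · rintro (rfl | ⟨β, rfl⟩)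
    · exact ⟨rational_JoldZero hn psi, fun s hs => dist_JoldZero.trans_le (lower s hs)⟩
    · exact ⟨rational_JoldBeta hn psi β, fun s hs => (dist_JoldBeta β).trans_le (lower s hs)⟩

end Ctrl

open Ctrl in
/-- the Kemeny outcomes of the restricted profile J⃗|_{Φ'} are exactly
{J*_{old,0}} ∪ {J*_{old,β} : β}, each of these ballots has cumulative Hamming distance
3m + 2 + 3u to J⃗|_{Φ'}, and every Kemeny outcome of J⃗|_{Φ'} sets the issue b to false. -/
theorem ctrl_old_winners (n m : ℕ) (hn : 0 < n) (hm : 0 < m)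
    (psi : (Fin n → Bool) → (Fin m → Bool) → Bool) :
    (∀ r : ↥(Phi' n m) → Bool,
      kemenyOn psi (Phi' n m) r ↔ (r = JoldZero ∨ ∃ β : Fin m → Bool, r = JoldBeta β)) ∧
    DistOn (Phi' n m) (JoldZero : ↥(Phi' n m) → Bool)
      = 3 * m + 2 + 3 * (10 * n + 10 * m + 10) ∧
    (∀ β : Fin m → Bool, DistOn (Phi' n m) (JoldBeta β : ↥(Phi' n m) → Bool)
      = 3 * m + 2 + 3 * (10 * n + 10 * m + 10)) ∧
    (∀ r : ↥(Phi' n m) → Bool, kemenyOn psi (Phi' n m) r →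
      r ⟨Issue.b, b_mem_Phi'⟩ = false) := by
  refine ⟨kemeny_iff hn psi, dist_JoldZero, dist_JoldBeta, fun r hr => ?_⟩
  rcases (kemeny_iff hn psi r).mp hr with rfl | ⟨β, rfl⟩ <;> rfl
end

section
/- In the control construction, for every α : X → Bool the ballot J*_α on the subagenda Φ''_α is rational, sets the issue b to true, and has cumulative Hamming distance Dist(J*_α, J⃗|_{Φ''_α}) = 3m + 4 + 3u to the restricted profile J⃗|_{Φ''_α}. -/
/-!
The constraint `Γ₀` holds for the full ballot that sets every `x`-, `x'`- and `t`-issue and `b` to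
true and everything else to false, whatever `ψ` is: the consequent of its last conjunct is
satisfied through the disjunct about `b`. This ballot extends `J*_α`, which gives rationality.

For the distance, `J*_α` and the restriction of `J_k` disagree exactly on the `t`-issues, on `b`, on
the issues `u_{k,ℓ}`, and, for the third ballot only, on `a` (`hamming_JstarA`). Summing over the
three ballots gives `3 (m + 1 + u) + 1`.
-/

/-!
Extended constraint-based judgment aggregation: the control construction.
The full set Φ of issues is an inductive type; subagendas are `Finset`s of issues;
a ballot on a subagenda Ψ is a function `↥Ψ → Bool`, and it is rational if it extends
to a ballot on all of Φ satisfying the integrity constraint Γ.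
-/

namespace Ctrl

variable {n m : ℕ}

/-- Indicator of membership in the subagenda Φ''_α: Φ' together with the issues x_i
with α(x_i) = true and the issues x'_i with α(x_i) = false. -/
def inPhiA (α : Fin n → Bool) : Issue n m → Bool := fun i => match i with
  | .x j => α j
  | .x' j => !(α j)
  | _ => true

/-- The subagenda Φ''_α. -/
def PhiA (α : Fin n → Bool) : Finset (Issue n m) :=
  Finset.univ.filter (fun i => inPhiA α i = true)

theorem b_mem_PhiA (α : Fin n → Bool) : (Issue.b : Issue n m) ∈ PhiA α :=
  Finset.mem_filter.mpr ⟨Finset.mem_univ _, rfl⟩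

/-- The ballot J*_α on Φ''_α: the included x-issues, all t-issues, and b true,
every other issue of Φ''_α false. -/
def JstarA (α : Fin n → Bool) : ↥(PhiA (m := m) α) → Bool := fun i => match i.1 with
  | .x _ => true
  | .x' _ => true
  | .t _ => true
  | .b => true
  | _ => false

end Ctrl

namespace Ctrl

/-- The full ballot with the `x`-, `x'`- and `t`-issues and `b` true and all other issues false.
It extends `J*_α` for every `α` at once. -/
def JstarFull (n m : ℕ) : Issue n m → Bool := fun i => match i with
  | .x _ => true
  | .x' _ => true
  | .t _ => true
  | .b => true
  | _ => false

theorem JstarA_eq {n m : ℕ} (α : Fin n → Bool) :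
    JstarA (m := m) α = restrict (PhiA α) (JstarFull n m) := rfl

/-- The issues on which `J*_α` differs from the `k`-th ballot of the profile. All of them lie in the
initial subagenda, so the set does not depend on `α`. -/
def disagree (n m : ℕ) (k : Fin 3) : Finset (Issue n m) :=
  Finset.univ.image Issue.t ∪ {Issue.b} ∪ Finset.univ.image (Issue.u k) ∪
    (if k = 2 then {Issue.a} else ∅)

theorem card_disagree (n m : ℕ) (k : Fin 3) :
    (disagree n m k).card =
      m + 1 + (10 * n + 10 * m + 10) + (if k = 2 then 1 else 0) := by
  have ht : Function.Injective (Issue.t : Fin m → Issue n m) := fun _ _ h => by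
    injection h
  have hu : Function.Injective (Issue.u k : _ → Issue n m) := fun _ _ h => by
    injection h
  unfold disagree
  rw [Finset.card_union_of_disjoint, Finset.card_union_of_disjoint,
    Finset.card_union_of_disjoint, Finset.card_image_of_injective _ ht,
    Finset.card_image_of_injective _ hu]
  · split_ifs <;> simp
  · simp
  · simp [Finset.disjoint_left]
  · split_ifs <;> simp

theorem hamming_restrict {n m : ℕ} (Ψ : Finset (Issue n m)) (r r' : Issue n m → Bool) :
    hamming (restrict Ψ r) (restrict Ψ r') = (Ψ.filter fun i => r i ≠ r' i).card := by
  rw [hamming, ← Finset.card_map (Function.Embedding.subtype (· ∈ Ψ))]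
  congr 1
  ext i
  rw [Finset.mem_map, Finset.mem_filter]
  constructor
  · rintro ⟨j, hj, rfl⟩
    exact ⟨j.2, (Finset.mem_filter.mp hj).2⟩
  · rintro ⟨hi, h⟩
    exact ⟨⟨i, hi⟩, Finset.mem_filter.mpr ⟨Finset.mem_univ _, h⟩, rfl⟩

theorem hamming_JstarA {n m : ℕ} (α : Fin n → Bool) (k : Fin 3) :
    hamming (JstarA (m := m) α) (restrict (PhiA α) (Jp k)) =
      m + 1 + (10 * n + 10 * m + 10) + (if k = 2 then 1 else 0) := by
  rw [← card_disagree, JstarA_eq, hamming_restrict]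
  congr 1
  ext i
  simp only [disagree, PhiA, Finset.mem_filter, Finset.mem_univ, true_and, Finset.mem_union,
    Finset.mem_image, Finset.mem_singleton]
  cases i <;> by_cases hk : k = 2 <;> simp [JstarFull, Jp, inPhiA, hk] <;> exact eq_comm

end Ctrl

open Ctrl in
/-- for every α : X → Bool, the ballot J*_α on Φ''_α is rational,
sets the issue b to true, and has cumulative Hamming distance 3m + 4 + 3u to the
restricted profile J⃗|_{Φ''_α}. -/
theorem ctrl_JstarA (n m : ℕ) (hn : 0 < n) (hm : 0 < m)
    (psi : (Fin n → Bool) → (Fin m → Bool) → Bool) (α : Fin n → Bool) :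
    rationalOn psi (PhiA α) (JstarA (m := m) α) ∧
    JstarA (m := m) α ⟨Issue.b, b_mem_PhiA α⟩ = true ∧
    DistOn (PhiA α) (JstarA (m := m) α) = 3 * m + 4 + 3 * (10 * n + 10 * m + 10) := by
  refine ⟨⟨JstarFull n m, fun _ => rfl, Or.inl ?_⟩, rfl, ?_⟩
  · exact ⟨Or.inr rfl, Or.inl rfl, Or.inr fun _ => rfl,
      fun _ => Or.inr ⟨rfl, fun _ => ⟨rfl, rfl, rfl⟩⟩⟩
  · simp only [DistOn, hamming_JstarA]
    simp
    ring
end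

section
/- In the control construction, for every α : X → Bool and β : Y → Bool, if ψ[α∪β] is false, then the ballot J*_{α,β} on the subagenda Φ''_α is rational and has cumulative Hamming distance Dist(J*_{α,β}, J⃗|_{Φ''_α}) = 3m + 2 + 3u to the restricted profile J⃗|_{Φ''_α}. -/
/-!
The extension of `J*_{α,β}` by `x_i ↦ α(x_i)`, `x'_i ↦ ¬α(x_i)` satisfies `Γ₀`: exactly one of
`a`, `b` holds, every pair `y_j, y'_j` is complementary, and the final implication is met by its
first disjunct because `ψ[α∪β]` is false.

For the distance, `J*_{α,β}` and `J_k` agree on the included x-issues, on every `t_j` and on `b`.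
They differ on exactly one of `y_j, y'_j` for each `j`, on the `u` issues `u_{k,ℓ}`, and on `a`
unless `k = 3` (`hamming_JstarAB`). The three distances `m + 1 + u`, `m + 1 + u`, `m + u` add up
to `3m + 2 + 3u`.
-/


/-!
Extended constraint-based judgment aggregation: the control construction.
The full set Φ of issues is an inductive type; subagendas are `Finset`s of issues;
a ballot on a subagenda Ψ is a function `↥Ψ → Bool`, and it is rational if it extends
to a ballot on all of Φ satisfying the integrity constraint Γ.
-/

namespace Ctrl

variable {n m : ℕ}

/-- The ballot J*_{α,β} on Φ''_α: the included x-issues true, y_j ↦ β(y_j),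
y'_j ↦ ¬β(y_j), a true, every other issue of Φ''_α false. -/
def JstarAB (α : Fin n → Bool) (β : Fin m → Bool) : ↥(PhiA (m := m) α) → Bool :=
  fun i => match i.1 with
  | .x _ => true
  | .x' _ => true
  | .y j => β j
  | .y' j => !(β j)
  | .a => true
  | _ => false

end Ctrl

namespace Ctrl

/-- The issues as a disjoint sum, one summand per constructor of `Issue`. -/
def issueEquiv (n m : ℕ) : Issue n m ≃
    Fin n ⊕ Fin n ⊕ Fin m ⊕ Fin m ⊕ Fin m ⊕ Unit ⊕ Unit ⊕
      (Fin 3 × Fin (10 * n + 10 * m + 10)) where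
  toFun
    | .x i => .inl i
    | .x' i => .inr (.inl i)
    | .y j => .inr (.inr (.inl j))
    | .y' j => .inr (.inr (.inr (.inl j)))
    | .t j => .inr (.inr (.inr (.inr (.inl j))))
    | .a => .inr (.inr (.inr (.inr (.inr (.inl ())))))
    | .b => .inr (.inr (.inr (.inr (.inr (.inr (.inl ()))))))
    | .u k l => .inr (.inr (.inr (.inr (.inr (.inr (.inr (k, l)))))))
  invFun
    | .inl i => .x i
    | .inr (.inl i) => .x' i
    | .inr (.inr (.inl j)) => .y j
    | .inr (.inr (.inr (.inl j))) => .y' j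
    | .inr (.inr (.inr (.inr (.inl j)))) => .t j
    | .inr (.inr (.inr (.inr (.inr (.inl _))))) => .a
    | .inr (.inr (.inr (.inr (.inr (.inr (.inl _)))))) => .b
    | .inr (.inr (.inr (.inr (.inr (.inr (.inr p)))))) => .u p.1 p.2
  left_inv i := by cases i <;> rfl
  right_inv i := by rcases i with _ | _ | _ | _ | _ | _ | _ | _ <;> rfl

theorem sum_issue {n m : ℕ} (f : Issue n m → ℕ) :
    ∑ i, f i = ∑ i, f (.x i) + (∑ i, f (.x' i) + (∑ j, f (.y j) + (∑ j, f (.y' j) +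
      (∑ j, f (.t j) + (f .a + (f .b + ∑ k, ∑ l, f (.u k l))))))) := by
  rw [← (issueEquiv n m).symm.sum_comp f]
  simp [Fintype.sum_sum_type, Fintype.sum_prod_type, issueEquiv]

/-- The extension of `J*_{α,β}` to all issues that reads off `α` on the x-issues. -/
def extAB {n m : ℕ} (α : Fin n → Bool) (β : Fin m → Bool) : Issue n m → Bool
  | .x i => α i
  | .x' i => !(α i)
  | .y j => β j
  | .y' j => !(β j)
  | .a => true
  | _ => false

theorem extAB_eq_JstarAB {n m : ℕ} (α : Fin n → Bool) (β : Fin m → Bool)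
    (i : ↥(PhiA (m := m) α)) : extAB α β i.1 = JstarAB α β i := by
  obtain ⟨i, hi⟩ := i
  have h := (Finset.mem_filter.mp hi).2
  cases i <;> first | rfl | exact h

theorem hamming_JstarAB {n m : ℕ} (α : Fin n → Bool) (β : Fin m → Bool) (k : Fin 3) :
    hamming (JstarAB (m := m) α β) (restrict (PhiA α) (Jp k)) =
      m + (if k = 2 then 0 else 1) + (10 * n + 10 * m + 10) := by
  -- Counting over the subagenda becomes counting over all issues with membership as a condition.
  have h : hamming (JstarAB (m := m) α β) (restrict (PhiA α) (Jp k)) =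
      ∑ i : Issue n m, if inPhiA α i = true ∧ extAB α β i ≠ Jp k i then 1 else 0 := by
    rw [← Finset.card_filter, hamming, ← Finset.card_map (Function.Embedding.subtype _)]
    congr 1
    ext i
    rw [Finset.mem_map, Finset.mem_filter]
    constructor
    · rintro ⟨p, hp, rfl⟩
      refine ⟨Finset.mem_univ _, (Finset.mem_filter.mp p.2).2, ?_⟩
      have hne := (Finset.mem_filter.mp hp).2
      rwa [← extAB_eq_JstarAB] at hne
    · rintro ⟨-, hi, hne⟩
      refine ⟨⟨i, Finset.mem_filter.mpr ⟨Finset.mem_univ _, hi⟩⟩,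
        Finset.mem_filter.mpr ⟨Finset.mem_univ _, ?_⟩, rfl⟩
      rwa [← extAB_eq_JstarAB]
  have hy : (∑ j, if β j = true then 1 else 0) + (∑ j, if β j = false then 1 else 0) = m := by
    rw [← Finset.sum_add_distrib,
      Finset.sum_congr rfl (g := fun _ => 1) (fun j _ => by cases β j <;> rfl)]
    simp
  rw [h, sum_issue]
  simp only [inPhiA, extAB, Jp]
  have hx : ∀ i, ¬ (α i = true ∧ α i ≠ true) := by simp
  have hx' : ∀ i, ¬ ((!α i) = true ∧ (!α i) ≠ true) := by simp
  simp only [hx, hx']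
  fin_cases k <;> simp at hy ⊢ <;> omega

end Ctrl

open Ctrl in
/-- for every α : X → Bool and β : Y → Bool, if ψ[α∪β] is false then
the ballot J*_{α,β} on Φ''_α is rational and has cumulative Hamming distance
3m + 2 + 3u to the restricted profile J⃗|_{Φ''_α}. -/
theorem ctrl_JstarAB (n m : ℕ) (hn : 0 < n) (hm : 0 < m)
    (psi : (Fin n → Bool) → (Fin m → Bool) → Bool)
    (α : Fin n → Bool) (β : Fin m → Bool)
    (hfalse : psi α β = false) :
    rationalOn psi (PhiA α) (JstarAB (m := m) α β) ∧
    DistOn (PhiA α) (JstarAB (m := m) α β)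
      = 3 * m + 2 + 3 * (10 * n + 10 * m + 10) := by
  constructor
  · have hB : bigB (extAB α β) := fun j => by simp [extAB]
    exact ⟨extAB α β, extAB_eq_JstarAB α β,
      .inl ⟨.inl rfl, .inr rfl, .inl hB, fun _ => .inl ⟨hB, rfl, hfalse⟩⟩⟩
  · simp only [DistOn, hamming_JstarAB]
    simp
    omega
end
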